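/- arXiv:2503.03933 — 2 statements merged into one kernel-verified Lean document; each statement's English description precedes it below -/
import Mathlib

section
/- Let α > 1, r = (1/2)(1 - 1/α), positive integers a ≤ b with s = a + b ≥ 2, and n_* = ⌊-log_r a⌋ + 1. If the even integer k satisfies k ≥ max{ ⌈2(1-r+r^{n_*})^{a-1}[b(1-r+r^{n_*})+a] / ((1-r)^{a-1}(1-r^{n_*})^{b-1}[b(1-r)+a(1-r^{n_*})]) + 2⌉·((1-r)/r)^a, 2((1-r)/r)^{a+1}, 2(1/(1-r))^{s-1} + 2 }, then [0, k/2] = { x₁^a x₂^b + x₃^a x₄^b + ⋯ + x_{k-1}^a x_k^b : x₁,…,x_k ∈ C_α }. -/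
/-- The `n`-th stage of the Cantor construction with ratio `r`:
`C_0 = [0,1]`, `C_{n+1} = f₀(C_n) ∪ f₁(C_n)` with `f₀ x = r x`, `f₁ x = r x + (1-r)`. -/
def preCantorR (r : ℝ) : ℕ → Set ℝ
  | 0 => Set.Icc 0 1
  | n + 1 =>
      (fun x => r * x) '' preCantorR r n ∪ (fun x => r * x + (1 - r)) '' preCantorR r n

/-- The generalized Cantor set with contraction ratio `r`. -/
def cantorSetR (r : ℝ) : Set ℝ := ⋂ n, preCantorR r n

/-- The classical Cantor ternary set. -/
def cantorTernary : Set ℝ := cantorSetR (1/3)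

/-- `pairSum a b m x = ∑_{i=1}^{m} x_{2i-1}^a x_{2i}^b` (0-indexed), i.e. the
non-diagonal form `f_{k,a,b}` with `k = 2m`. -/
def pairSum (a b m : ℕ) (x : ℕ → ℝ) : ℝ :=
  ∑ i ∈ Finset.range m, x (2 * i) ^ a * x (2 * i + 1) ^ b

/-- The image `f_{k,a,b}(S^k)` with `k = 2m`. -/
def imageOn (a b m : ℕ) (S : Set ℝ) : Set ℝ :=
  {y | ∃ x : ℕ → ℝ, (∀ i, x i ∈ S) ∧ y = pairSum a b m x}

/-- `n_* = ⌊-log_r a⌋ + 1`. -/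
noncomputable def nstar (r : ℝ) (a : ℕ) : ℤ := ⌊-Real.logb r a⌋ + 1

/-!
Setting every second variable to `1 ∈ C_α` turns the claim into: each `T ∈ [0, m]`, where
`m = k / 2`, is a sum of `m` many `a`-th powers of points of `C_α`. The set of these powers is
`[0, 1]` minus countably many gaps, and its Newhouse thickness is at least `1 / (m - 1)`: two gaps
are separated by at least `1 / (m - 1)` times the length of the shorter one.

Start with any real solution of `∑ i, x i = T` in `[0, 1]` and remove finitely many
(coordinate, gap) pairs, in order of decreasing gap length. If the coordinate to be treated lies in
the gap, every other coordinate lies in an interval free of its own removed gaps whose length is at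
least `1 / (m - 1)` times that of the current gap. The other coordinates can therefore compensate
for moving the bad one to an endpoint of its gap. Compactness removes all gaps at once.
-/

section ThickGaps

variable {ι κ : Type*} {A B τ : ℝ} {lo hi : ι → ℝ}

/-- The intervals `(lo w, hi w)` are pairwise disjoint gaps in `[A, B]` whose complement has
Newhouse thickness at least `τ`: each gap has distance at least `τ` times its length from `A` and
`B`, and two gaps have distance at least `τ` times the length of the shorter one. The maximum in
`pairwise` is the distance of the two gaps, in whichever order they come. -/
structure IsThickGapFamily (A B τ : ℝ) (lo hi : ι → ℝ) : Prop where
  nonneg : 0 ≤ τ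
  lo_le_hi : ∀ w, lo w ≤ hi w
  left : ∀ w, τ * (hi w - lo w) ≤ lo w - A
  right : ∀ w, τ * (hi w - lo w) ≤ B - hi w
  pairwise : Pairwise fun v w =>
    τ * min (hi v - lo v) (hi w - lo w) ≤ max (lo w - hi v) (lo v - hi w)

namespace IsThickGapFamily

theorem mul_length_nonneg (h : IsThickGapFamily A B τ lo hi) (w : ι) : 0 ≤ τ * (hi w - lo w) :=
  mul_nonneg h.nonneg (sub_nonneg.2 (h.lo_le_hi w))

theorem hi_le_lo_or_hi_le_lo (h : IsThickGapFamily A B τ lo hi) {v w : ι} (hvw : v ≠ w) :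
    hi v ≤ lo w ∨ hi w ≤ lo v := by
  have hmin : 0 ≤ τ * min (hi v - lo v) (hi w - lo w) :=
    mul_nonneg h.nonneg (le_min (sub_nonneg.2 (h.lo_le_hi v)) (sub_nonneg.2 (h.lo_le_hi w)))
  simpa only [le_max_iff, sub_nonneg] using hmin.trans (h.pairwise hvw)

theorem lo_mem_Icc (h : IsThickGapFamily A B τ lo hi) (w : ι) : lo w ∈ Set.Icc A B :=
  ⟨by linarith [h.left w, h.mul_length_nonneg w],
    by linarith [h.right w, h.mul_length_nonneg w, h.lo_le_hi w]⟩

theorem hi_mem_Icc (h : IsThickGapFamily A B τ lo hi) (w : ι) : hi w ∈ Set.Icc A B :=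
  ⟨(h.lo_mem_Icc w).1.trans (h.lo_le_hi w), by linarith [h.right w, h.mul_length_nonneg w]⟩

theorem lo_notMem_Ioo (h : IsThickGapFamily A B τ lo hi) (v w : ι) :
    lo v ∉ Set.Ioo (lo w) (hi w) := by
  rintro ⟨hlo, hhi⟩
  have hvw : v ≠ w := by rintro rfl; exact hlo.false
  rcases h.hi_le_lo_or_hi_le_lo hvw with hle | hle <;> linarith [h.lo_le_hi v]

theorem hi_notMem_Ioo (h : IsThickGapFamily A B τ lo hi) (v w : ι) :
    hi v ∉ Set.Ioo (lo w) (hi w) := by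
  rintro ⟨hlo, hhi⟩
  have hvw : v ≠ w := by rintro rfl; exact hhi.false
  rcases h.hi_le_lo_or_hi_le_lo hvw with hle | hle <;> linarith [h.lo_le_hi v]

theorem mul_le_lo_sub_hi (h : IsThickGapFamily A B τ lo hi) {v w : ι} {ε : ℝ}
    (hv : ε ≤ hi v - lo v) (hw : ε ≤ hi w - lo w) (hvw : hi v ≤ lo w) :
    τ * ε ≤ lo w - hi v := by
  rcases eq_or_ne v w with rfl | hne
  · have : ε ≤ 0 := by linarith
    linarith [mul_nonpos_of_nonneg_of_nonpos h.nonneg this]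
  · have hmax : max (lo w - hi v) (lo v - hi w) = lo w - hi v :=
      max_eq_left (by linarith [h.lo_le_hi v, h.lo_le_hi w])
    exact hmax ▸ (mul_le_mul_of_nonneg_left (le_min hv hw) h.nonneg).trans (h.pairwise hne)

theorem exists_long_Icc_avoiding (h : IsThickGapFamily A B τ lo hi) {ε : ℝ}
    (hε : τ * ε ≤ B - A) {s : Finset ι} (hs : ∀ w ∈ s, ε ≤ hi w - lo w) {x : ℝ}
    (hx : x ∈ Set.Icc A B) (hxs : ∀ w ∈ s, x ∉ Set.Ioo (lo w) (hi w)) :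
    ∃ c d, x ∈ Set.Icc c d ∧ τ * ε ≤ d - c ∧ Set.Icc c d ⊆ Set.Icc A B ∧
      ∀ w ∈ s, Disjoint (Set.Icc c d) (Set.Ioo (lo w) (hi w)) := by
  classical
  obtain ⟨c, hc, hmax⟩ := ((insert A (s.image hi)).filter (· ≤ x)).exists_max_image id
    ⟨A, by simp [hx.1]⟩
  obtain ⟨d, hd, hmin⟩ := ((insert B (s.image lo)).filter (x ≤ ·)).exists_min_image id
    ⟨B, by simp [hx.2]⟩
  simp only [Finset.mem_filter, Finset.mem_insert, Finset.mem_image, id_eq, and_imp]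
    at hc hd hmax hmin
  obtain ⟨hc, hcx⟩ := hc
  obtain ⟨hd, hxd⟩ := hd
  refine ⟨c, d, ⟨hcx, hxd⟩, ?_,
    Set.Icc_subset_Icc (hmax A (.inl rfl) hx.1) (hmin B (.inl rfl) hx.2), fun w hw => ?_⟩
  · have mul_le {w} (hw : w ∈ s) : τ * ε ≤ τ * (hi w - lo w) :=
      mul_le_mul_of_nonneg_left (hs w hw) h.nonneg
    rcases hc with rfl | ⟨v, hv, rfl⟩ <;> rcases hd with rfl | ⟨w, hw, rfl⟩
    · exact hε
    · exact (mul_le hw).trans (h.left w)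
    · exact (mul_le hv).trans (h.right v)
    · exact h.mul_le_lo_sub_hi (hs v hv) (hs w hw) (hcx.trans hxd)
  · refine Set.disjoint_left.2 fun y hy hyw => hxs w hw ⟨?_, ?_⟩
    · by_contra! hle
      exact (hyw.1.trans_le hy.2).not_ge (hmin _ (.inr ⟨w, hw, rfl⟩) hle)
    · by_contra! hle
      exact (hy.1.trans_lt hyw.2).not_ge (hmax _ (.inr ⟨w, hw, rfl⟩) hle)

end IsThickGapFamily

theorem exists_mem_Icc_sum_eq (s : Finset κ) {c d : κ → ℝ} (hcd : c ≤ d) {T : ℝ}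
    (hT : T ∈ Set.Icc (∑ i ∈ s, c i) (∑ i ∈ s, d i)) :
    ∃ x ∈ Set.Icc c d, ∑ i ∈ s, x i = T :=
  (convex_Icc c d).isPreconnected.intermediate_value (Set.left_mem_Icc.2 hcd)
    (Set.right_mem_Icc.2 hcd) (f := fun x => ∑ i ∈ s, x i) (by fun_prop) hT

variable [Fintype κ]

theorem exists_sum_eq_sum_of_move_to_endpoint [DecidableEq κ] {x c d : κ → ℝ} {i₀ : κ}
    {p q : ℝ} (hx : x i₀ ∈ Set.Icc p q) (hcd : x ∈ Set.Icc c d)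
    (hlen : q - p ≤ ∑ i ∈ {i₀}ᶜ, (d i - c i)) :
    ∃ y : κ → ℝ, (y i₀ = p ∨ y i₀ = q) ∧ (∀ i ≠ i₀, y i ∈ Set.Icc (c i) (d i)) ∧
      ∑ i, y i = ∑ i, x i := by
  have move (z : ℝ) (hc : ∑ i, Function.update c i₀ z i ≤ ∑ i, x i)
      (hd : ∑ i, x i ≤ ∑ i, Function.update d i₀ z i) :
      ∃ y : κ → ℝ, y i₀ = z ∧ (∀ i ≠ i₀, y i ∈ Set.Icc (c i) (d i)) ∧
        ∑ i, y i = ∑ i, x i := by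
    obtain ⟨y, ⟨hcy, hyd⟩, hsum⟩ := exists_mem_Icc_sum_eq Finset.univ
      (update_le_update_iff.2 ⟨le_rfl, fun i _ => (hcd.1 i).trans (hcd.2 i)⟩) ⟨hc, hd⟩
    refine ⟨y, le_antisymm (by simpa using hyd i₀) (by simpa using hcy i₀), fun i hi => ?_, hsum⟩
    exact ⟨by simpa [hi] using hcy i, by simpa [hi] using hyd i⟩
  have sum_update (f : κ → ℝ) (z : ℝ) :
      ∑ i, Function.update f i₀ z i = z + ∑ i ∈ {i₀}ᶜ, f i :=
    Finset.sum_update_of_mem (Finset.mem_univ i₀) f z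
  rcases le_total (∑ i, x i) (∑ i, Function.update d i₀ p i) with hle | hle
  · have hc : ∑ i, Function.update c i₀ p i ≤ ∑ i, x i :=
      Finset.sum_le_sum fun i _ => update_le_iff.2 ⟨hx.1, fun j _ => hcd.1 j⟩ i
    obtain ⟨y, hy, hy'⟩ := move p hc hle
    exact ⟨y, .inl hy, hy'⟩
  · have hd : ∑ i, x i ≤ ∑ i, Function.update d i₀ q i :=
      Finset.sum_le_sum fun i _ => le_update_iff.2 ⟨hx.2, fun j _ => hcd.2 j⟩ i
    have hc : ∑ i, Function.update c i₀ q i ≤ ∑ i, x i := by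
      rw [sum_update] at hle ⊢
      rw [Finset.sum_sub_distrib] at hlen
      linarith
    obtain ⟨y, hy, hy'⟩ := move q hc hd
    exact ⟨y, .inr hy, hy'⟩

namespace IsThickGapFamily

theorem exists_sum_eq_avoiding_insert [DecidableEq κ] [DecidableEq ι]
    (h : IsThickGapFamily A B τ lo hi) (hcard : 1 ≤ (Fintype.card κ - 1) * τ)
    {S : Finset (κ × ι)} {i₀ : κ} {w₀ : ι}
    (hS : ∀ p ∈ S, hi w₀ - lo w₀ ≤ hi p.2 - lo p.2) {x : κ → ℝ}
    (hx : ∀ i, x i ∈ Set.Icc A B) (hxS : ∀ p ∈ S, x p.1 ∉ Set.Ioo (lo p.2) (hi p.2)) :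
    ∃ y : κ → ℝ, (∀ i, y i ∈ Set.Icc A B) ∧
      (∀ p ∈ insert (i₀, w₀) S, y p.1 ∉ Set.Ioo (lo p.2) (hi p.2)) ∧
      ∑ i, y i = ∑ i, x i := by
  by_cases hgap : x i₀ ∈ Set.Ioo (lo w₀) (hi w₀)
  swap
  · exact ⟨x, hx, Finset.forall_mem_insert _ _ _ |>.2 ⟨hgap, hxS⟩, rfl⟩
  have hε : τ * (hi w₀ - lo w₀) ≤ B - A :=
    (h.left w₀).trans (by linarith [(h.lo_mem_Icc w₀).2])
  choose c d hcd hlen hAB hdisj using fun i =>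
    h.exists_long_Icc_avoiding hε (s := S.preimage (Prod.mk i) (Prod.mk_right_injective i).injOn)
      (fun w hw => hS _ (Finset.mem_preimage.1 hw)) (hx i)
      (fun w hw => hxS _ (Finset.mem_preimage.1 hw))
  have hlen' : hi w₀ - lo w₀ ≤ ∑ i ∈ {i₀}ᶜ, (d i - c i) := by
    have hpos : 0 < Fintype.card κ := Fintype.card_pos_iff.2 ⟨i₀⟩
    calc hi w₀ - lo w₀ ≤ (Fintype.card κ - 1) * τ * (hi w₀ - lo w₀) :=
          le_mul_of_one_le_left (sub_nonneg.2 (h.lo_le_hi w₀)) hcard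
      _ = ∑ _i ∈ ({i₀}ᶜ : Finset κ), τ * (hi w₀ - lo w₀) := by
          rw [Finset.sum_const, Finset.card_compl, Finset.card_singleton, nsmul_eq_mul,
            Nat.cast_pred hpos, mul_assoc]
      _ ≤ ∑ i ∈ {i₀}ᶜ, (d i - c i) := Finset.sum_le_sum fun i _ => hlen i
  obtain ⟨y, hy₀, hy, hsum⟩ := exists_sum_eq_sum_of_move_to_endpoint
    (Set.Ioo_subset_Icc_self hgap) ⟨fun i => (hcd i).1, fun i => (hcd i).2⟩ hlen'
  have hy₀AB : y i₀ ∈ Set.Icc A B := by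
    rcases hy₀ with hy₀ | hy₀ <;> rw [hy₀]
    exacts [h.lo_mem_Icc w₀, h.hi_mem_Icc w₀]
  have hy₀gap (w : ι) : y i₀ ∉ Set.Ioo (lo w) (hi w) := by
    rcases hy₀ with hy₀ | hy₀ <;> rw [hy₀]
    exacts [h.lo_notMem_Ioo w₀ w, h.hi_notMem_Ioo w₀ w]
  refine ⟨y, fun i => ?_, fun ⟨i, w⟩ hp => ?_, hsum⟩ <;> rcases eq_or_ne i i₀ with rfl | hi
  · exact hy₀AB
  · exact hAB i (hy i hi)
  · exact hy₀gap w
  · have hpS : (i, w) ∈ S := Finset.mem_of_mem_insert_of_ne hp (by simp [hi])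
    exact Set.disjoint_left.1 (hdisj i w (Finset.mem_preimage.2 hpS)) (hy i hi)

theorem exists_sum_eq_avoiding_finset (h : IsThickGapFamily A B τ lo hi)
    (hcard : 1 ≤ (Fintype.card κ - 1) * τ) {T : ℝ}
    (hT : T ∈ Set.Icc (Fintype.card κ * A) (Fintype.card κ * B)) (S : Finset (κ × ι)) :
    ∃ x : κ → ℝ, (∀ i, x i ∈ Set.Icc A B) ∧
      (∀ p ∈ S, x p.1 ∉ Set.Ioo (lo p.2) (hi p.2)) ∧ ∑ i, x i = T := by
  classical
  induction S using Finset.induction_on_max_value (fun p : κ × ι => lo p.2 - hi p.2) with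
  | empty =>
    have hpos : (0 : ℝ) < Fintype.card κ := by
      by_contra! hle
      linarith [mul_nonpos_of_nonpos_of_nonneg (by linarith : (Fintype.card κ : ℝ) - 1 ≤ 0)
        h.nonneg]
    refine ⟨fun _ => T / Fintype.card κ, fun _ => ⟨?_, ?_⟩, by simp, ?_⟩
    · rw [le_div_iff₀' hpos]; exact hT.1
    · rw [div_le_iff₀' hpos]; exact hT.2
    · simp [mul_div_cancel₀ T hpos.ne']
  | insert p S _ hmin ih =>
    obtain ⟨x, hx, hxS, rfl⟩ := ih
    exact h.exists_sum_eq_avoiding_insert hcard (fun q hq => by linarith [hmin q hq]) hx hxS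

theorem exists_sum_eq (h : IsThickGapFamily A B τ lo hi)
    (hcard : 1 ≤ (Fintype.card κ - 1) * τ) {T : ℝ}
    (hT : T ∈ Set.Icc (Fintype.card κ * A) (Fintype.card κ * B)) :
    ∃ x : κ → ℝ, (∀ i, x i ∈ Set.Icc A B) ∧ (∀ i w, x i ∉ Set.Ioo (lo w) (hi w)) ∧
      ∑ i, x i = T := by
  have hcompact : IsCompact
      (Set.univ.pi (fun _ : κ => Set.Icc A B) ∩ {x : κ → ℝ | ∑ i, x i = T}) :=
    (isCompact_univ_pi fun _ => isCompact_Icc).inter_right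
      (isClosed_eq (by fun_prop) continuous_const)
  obtain ⟨x, ⟨hx, hsum⟩, hgap⟩ := hcompact.inter_iInter_nonempty
    (fun p : κ × ι => {x | x p.1 ∉ Set.Ioo (lo p.2) (hi p.2)})
    (fun p => (isOpen_Ioo.preimage (continuous_apply p.1)).isClosed_compl)
    (fun S => by
      obtain ⟨x, hx, hxS, hsum⟩ := h.exists_sum_eq_avoiding_finset hcard hT S
      exact ⟨x, ⟨fun i _ => hx i, hsum⟩, Set.mem_iInter₂.2 hxS⟩)
  exact ⟨x, fun i => hx i trivial, fun i w => Set.mem_iInter.1 hgap (i, w), hsum⟩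

end IsThickGapFamily

end ThickGaps

section PowerIncrements

variable {u v p q : ℝ}

theorem add_pow_sub_pow_le_add_pow_sub_pow (hu : 0 ≤ u) (huv : u ≤ v) (hp : 0 ≤ p) (n : ℕ) :
    (u + p) ^ n - u ^ n ≤ (v + p) ^ n - v ^ n := by
  have hv : 0 ≤ v := hu.trans huv
  rw [← geom_sum₂_mul, ← geom_sum₂_mul, add_sub_cancel_left, add_sub_cancel_left]
  gcongr

theorem add_mul_pow_sub_pow_le_pow_mul (hu : 0 ≤ u) (hp : 0 ≤ p) {t : ℝ} (ht : 1 ≤ t) (n : ℕ) :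
    (u + t * p) ^ n - u ^ n ≤ t ^ n * ((u + p) ^ n - u ^ n) := by
  calc (u + t * p) ^ n - u ^ n ≤ (t * u + t * p) ^ n - (t * u) ^ n :=
        add_pow_sub_pow_le_add_pow_sub_pow hu (le_mul_of_one_le_left hu ht) (by positivity) n
    _ = t ^ n * ((u + p) ^ n - u ^ n) := by rw [← mul_add, mul_pow, mul_pow, mul_sub]

theorem add_pow_sub_add_pow_le (hu : 0 ≤ u) (hp : 0 < p) (hpq : p ≤ q) (n : ℕ) :
    (u + q) ^ n - (u + p) ^ n ≤ ((q / p) ^ n - 1) * ((u + p) ^ n - u ^ n) := by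
  have := add_mul_pow_sub_pow_le_pow_mul hu hp.le ((one_le_div hp).2 hpq) n
  rw [div_mul_cancel₀ q hp.ne'] at this
  linarith

end PowerIncrements

/-- The similarity `f₀` (for `c = false`) or `f₁` (for `c = true`) generating the Cantor set. -/
def cantorMap (r : ℝ) (c : Bool) (x : ℝ) : ℝ := r * x + if c then 1 - r else 0

/-- The composition of the generating similarities along the word `w`. Its values at `0`, `r`,
`1 - r` and `1` are the endpoints of the basic interval with address `w` and of the gap removed
from it. -/
def cantorWordMap (r : ℝ) (w : List Bool) (x : ℝ) : ℝ := w.foldr (cantorMap r) x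

section CantorGaps

variable {r : ℝ}

@[simp]
theorem cantorWordMap_nil (r x : ℝ) : cantorWordMap r [] x = x := rfl

@[simp]
theorem cantorWordMap_cons (r : ℝ) (c : Bool) (w : List Bool) (x : ℝ) :
    cantorWordMap r (c :: w) x = cantorMap r c (cantorWordMap r w x) := rfl

theorem cantorMap_strictMono (h0 : 0 < r) (c : Bool) : StrictMono (cantorMap r c) :=
  (strictMono_mul_left_of_pos h0).add_const _

theorem cantorWordMap_strictMono (h0 : 0 < r) (w : List Bool) :
    StrictMono (cantorWordMap r w) := by
  induction w with
  | nil => exact strictMono_id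
  | cons c w ih => exact (cantorMap_strictMono h0 c).comp ih

theorem cantorWordMap_eq_add (r : ℝ) (w : List Bool) (x : ℝ) :
    cantorWordMap r w x = cantorWordMap r w 0 + r ^ w.length * x := by
  induction w with
  | nil => simp
  | cons c w ih =>
    rw [cantorWordMap_cons, ih, cantorWordMap_cons, List.length_cons, cantorMap, cantorMap]
    ring

theorem cantorMap_false_le (h0 : 0 < r) {x : ℝ} (hx : x ≤ 1) : cantorMap r false x ≤ r := by
  simpa [cantorMap] using mul_le_of_le_one_right h0.le hx

theorem le_cantorMap_true (h0 : 0 < r) {x : ℝ} (hx : 0 ≤ x) : 1 - r ≤ cantorMap r true x := by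
  simpa [cantorMap] using mul_nonneg h0.le hx

theorem cantorWordMap_mem_Icc (h0 : 0 < r) (h1 : r ≤ 1) (w : List Bool) {x : ℝ}
    (hx : x ∈ Set.Icc (0 : ℝ) 1) : cantorWordMap r w x ∈ Set.Icc (0 : ℝ) 1 := by
  induction w with
  | nil => exact hx
  | cons c w ih =>
    have hnonneg := mul_nonneg h0.le ih.1
    have hle := mul_le_of_le_one_right h0.le ih.2
    cases c <;> constructor <;> simp [cantorMap] <;> linarith

/-- The gap `v` lies to the left of the gap `w`, and between them lies the left child of the basic
interval `w` or the right child of the basic interval `v`. -/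
def GapPrecedes (r : ℝ) (v w : List Bool) : Prop :=
  cantorWordMap r v (1 - r) ≤ cantorWordMap r w 0 ∨ cantorWordMap r v 1 ≤ cantorWordMap r w r

theorem GapPrecedes.cons (h0 : 0 < r) {v w : List Bool} (h : GapPrecedes r v w) (c : Bool) :
    GapPrecedes r (c :: v) (c :: w) :=
  h.imp (fun h => (cantorMap_strictMono h0 c).monotone h)
    (fun h => (cantorMap_strictMono h0 c).monotone h)

theorem gapPrecedes_or_gapPrecedes (h0 : 0 < r) (h1 : r ≤ 1 / 2) {v w : List Bool}
    (hvw : v ≠ w) : GapPrecedes r v w ∨ GapPrecedes r w v := by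
  have mem (w) {x : ℝ} (hx : x ∈ Set.Icc (0 : ℝ) 1) := cantorWordMap_mem_Icc h0 (by linarith) w hx
  have zero_mem : (0 : ℝ) ∈ Set.Icc (0 : ℝ) 1 := ⟨le_rfl, zero_le_one⟩
  have one_mem : (1 : ℝ) ∈ Set.Icc (0 : ℝ) 1 := ⟨zero_le_one, le_rfl⟩
  have r_mem : r ∈ Set.Icc (0 : ℝ) 1 := ⟨h0.le, by linarith⟩
  have nil_true (w) : GapPrecedes r [] (true :: w) :=
    .inl (le_cantorMap_true h0 (mem w zero_mem).1)
  have false_nil (w) : GapPrecedes r (false :: w) [] :=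
    .inr (cantorMap_false_le h0 (mem w one_mem).2)
  have false_true (v w) : GapPrecedes r (false :: v) (true :: w) := by
    refine .inr ((cantorMap_false_le h0 (mem v one_mem).2).trans ?_)
    exact (by linarith : r ≤ 1 - r).trans (le_cantorMap_true h0 (mem w r_mem).1)
  induction v generalizing w with
  | nil =>
    match w with
    | [] => exact absurd rfl hvw
    | true :: w => exact .inl (nil_true w)
    | false :: w => exact .inr (false_nil w)
  | cons c v ih =>
    match c, w with
    | true, [] => exact .inr (nil_true v)
    | false, [] => exact .inl (false_nil v)
    | false, true :: w => exact .inl (false_true v w)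
    | true, false :: w => exact .inr (false_true w v)
    | true, true :: w | false, false :: w =>
      exact (ih (ne_of_apply_ne _ hvw)).imp (·.cons h0 _) (·.cons h0 _)

theorem mem_preCantorR_of_forall_notMem_gap (h0 : 0 < r) (n : ℕ) {x : ℝ}
    (hx : x ∈ Set.Icc (0 : ℝ) 1)
    (hgap : ∀ w, x ∉ Set.Ioo (cantorWordMap r w r) (cantorWordMap r w (1 - r))) :
    x ∈ preCantorR r n := by
  induction n generalizing x with
  | zero => exact hx
  | succ n ih =>
    obtain ⟨c, y, hy, rfl⟩ : ∃ c, ∃ y ∈ Set.Icc (0 : ℝ) 1, cantorMap r c y = x := by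
      rcases le_or_gt x r with hxr | hrx
      · exact ⟨false, x / r, ⟨div_nonneg hx.1 h0.le, (div_le_one h0).2 hxr⟩,
          by simp [cantorMap, mul_div_cancel₀ x h0.ne']⟩
      · have hrx' : 1 - r ≤ x := not_lt.1 fun hlt => hgap [] ⟨hrx, hlt⟩
        exact ⟨true, (x - (1 - r)) / r, ⟨div_nonneg (by linarith) h0.le,
          (div_le_one h0).2 (by linarith [hx.2])⟩, by simp [cantorMap, mul_div_cancel₀ _ h0.ne']⟩
    have hyn : y ∈ preCantorR r n := ih hy fun w hyw => hgap (c :: w)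
      ⟨cantorMap_strictMono h0 c hyw.1, cantorMap_strictMono h0 c hyw.2⟩
    cases c
    exacts [.inl ⟨y, hyn, by simp [cantorMap]⟩, .inr ⟨y, hyn, by simp [cantorMap]⟩]

theorem cantorSetR_subset_Icc (r : ℝ) : cantorSetR r ⊆ Set.Icc 0 1 :=
  Set.iInter_subset (preCantorR r) 0

theorem one_mem_cantorSetR (r : ℝ) : (1 : ℝ) ∈ cantorSetR r := by
  refine Set.mem_iInter.2 fun n => ?_
  induction n with
  | zero => exact ⟨zero_le_one, le_rfl⟩
  | succ n ih => exact .inr ⟨1, ih, by ring⟩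

/-- A lower bound for the Newhouse thickness of the set of `a`-th powers of the Cantor set. It is
the ratio of the left bridge `r ^ a` to the gap `(1 - r) ^ a - r ^ a` in the first step of the
construction. -/
noncomputable def cantorPowThickness (r : ℝ) (a : ℕ) : ℝ := (((1 - r) / r) ^ a - 1)⁻¹

theorem one_lt_one_sub_div_pow (h0 : 0 < r) (h1 : r < 1 / 2) {a : ℕ} (ha : a ≠ 0) :
    1 < ((1 - r) / r) ^ a :=
  one_lt_pow₀ ((one_lt_div h0).2 (by linarith)) ha

theorem cantorPowThickness_pos (h0 : 0 < r) (h1 : r < 1 / 2) {a : ℕ} (ha : a ≠ 0) :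
    0 < cantorPowThickness r a :=
  inv_pos.2 (sub_pos.2 (one_lt_one_sub_div_pow h0 h1 ha))

theorem cantorPowThickness_mul_gap_le_left_bridge (h0 : 0 < r) (h1 : r < 1 / 2) {a : ℕ}
    (ha : a ≠ 0) (w : List Bool) :
    cantorPowThickness r a * (cantorWordMap r w (1 - r) ^ a - cantorWordMap r w r ^ a) ≤
      cantorWordMap r w r ^ a - cantorWordMap r w 0 ^ a := by
  have hpow : 0 < r ^ w.length := by positivity
  have hleft := (cantorWordMap_mem_Icc h0 (by linarith) w ⟨le_rfl, zero_le_one⟩).1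
  have := add_pow_sub_add_pow_le hleft (mul_pos hpow h0)
    (mul_le_mul_of_nonneg_left (by linarith : r ≤ 1 - r) hpow.le) a
  rw [mul_div_mul_left _ _ hpow.ne', ← cantorWordMap_eq_add, ← cantorWordMap_eq_add] at this
  exact (inv_mul_le_iff₀ (sub_pos.2 (one_lt_one_sub_div_pow h0 h1 ha))).2 this

theorem pow_left_bridge_le_right_bridge (h0 : 0 < r) (h1 : r ≤ 1) (a : ℕ) (w : List Bool) :
    cantorWordMap r w r ^ a - cantorWordMap r w 0 ^ a ≤
      cantorWordMap r w 1 ^ a - cantorWordMap r w (1 - r) ^ a := by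
  have hleft := (cantorWordMap_mem_Icc h0 h1 w ⟨le_rfl, zero_le_one⟩).1
  have hmono := (cantorWordMap_strictMono h0 w).monotone (sub_nonneg.2 h1)
  have := add_pow_sub_pow_le_add_pow_sub_pow hleft hmono (by positivity : 0 ≤ r ^ w.length * r) a
  rwa [← cantorWordMap_eq_add, cantorWordMap_eq_add r w (1 - r), add_assoc, ← mul_add,
    sub_add_cancel, ← cantorWordMap_eq_add, ← cantorWordMap_eq_add] at this

theorem cantorPowThickness_mul_gap_le_right_bridge (h0 : 0 < r) (h1 : r < 1 / 2) {a : ℕ}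
    (ha : a ≠ 0) (w : List Bool) :
    cantorPowThickness r a * (cantorWordMap r w (1 - r) ^ a - cantorWordMap r w r ^ a) ≤
      cantorWordMap r w 1 ^ a - cantorWordMap r w (1 - r) ^ a :=
  (cantorPowThickness_mul_gap_le_left_bridge h0 h1 ha w).trans
    (pow_left_bridge_le_right_bridge h0 (by linarith) a w)

theorem GapPrecedes.cantorPowThickness_mul_min_le (h0 : 0 < r) (h1 : r < 1 / 2) {a : ℕ}
    (ha : a ≠ 0) {v w : List Bool} (h : GapPrecedes r v w) :
    cantorPowThickness r a * min (cantorWordMap r v (1 - r) ^ a - cantorWordMap r v r ^ a)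
        (cantorWordMap r w (1 - r) ^ a - cantorWordMap r w r ^ a) ≤
      cantorWordMap r w r ^ a - cantorWordMap r v (1 - r) ^ a := by
  have hthick := (cantorPowThickness_pos h0 h1 ha).le
  have nonneg {x : ℝ} (hx : x ∈ Set.Icc (0 : ℝ) 1) : 0 ≤ cantorWordMap r v x :=
    (cantorWordMap_mem_Icc h0 (by linarith) v hx).1
  rcases h with h | h
  · have hpow := pow_le_pow_left₀ (nonneg ⟨by linarith, by linarith⟩) h a
    exact (mul_le_mul_of_nonneg_left (min_le_right _ _) hthick).trans
      ((cantorPowThickness_mul_gap_le_left_bridge h0 h1 ha w).trans (sub_le_sub_left hpow _))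
  · have hpow := pow_le_pow_left₀ (nonneg ⟨zero_le_one, le_rfl⟩) h a
    exact (mul_le_mul_of_nonneg_left (min_le_left _ _) hthick).trans
      ((cantorPowThickness_mul_gap_le_right_bridge h0 h1 ha v).trans (sub_le_sub_right hpow _))

theorem isThickGapFamily_cantor_pow (h0 : 0 < r) (h1 : r < 1 / 2) {a : ℕ} (ha : a ≠ 0) :
    IsThickGapFamily 0 1 (cantorPowThickness r a)
      (fun w => cantorWordMap r w r ^ a) (fun w => cantorWordMap r w (1 - r) ^ a) where
  nonneg := (cantorPowThickness_pos h0 h1 ha).le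
  lo_le_hi w := pow_le_pow_left₀
    (cantorWordMap_mem_Icc h0 (by linarith) w ⟨h0.le, by linarith⟩).1
    ((cantorWordMap_strictMono h0 w).monotone (by linarith)) a
  left w := by
    have hleft := cantorWordMap_mem_Icc h0 (by linarith) w ⟨le_rfl, zero_le_one⟩
    exact (cantorPowThickness_mul_gap_le_left_bridge h0 h1 ha w).trans
      (sub_le_sub_left (pow_nonneg hleft.1 a) _)
  right w := by
    have hright := cantorWordMap_mem_Icc h0 (by linarith) w ⟨zero_le_one, le_rfl⟩
    exact (cantorPowThickness_mul_gap_le_right_bridge h0 h1 ha w).trans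
      (sub_le_sub_right (pow_le_one₀ hright.1 hright.2) _)
  pairwise v w hvw := by
    rcases gapPrecedes_or_gapPrecedes h0 h1.le hvw with h | h
    · exact (h.cantorPowThickness_mul_min_le h0 h1 ha).trans (le_max_left _ _)
    · rw [min_comm]
      exact (h.cantorPowThickness_mul_min_le h0 h1 ha).trans (le_max_right _ _)

theorem exists_mem_cantorSetR_pow_eq (h0 : 0 < r) (h1 : r ≤ 1) {a : ℕ} (ha : a ≠ 0) {x : ℝ}
    (hx : x ∈ Set.Icc (0 : ℝ) 1)
    (hgap : ∀ w, x ∉ Set.Ioo (cantorWordMap r w r ^ a) (cantorWordMap r w (1 - r) ^ a)) :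
    ∃ y ∈ cantorSetR r, y ^ a = x := by
  obtain ⟨y, hy, rfl⟩ : ∃ y ∈ Set.Icc (0 : ℝ) 1, y ^ a = x :=
    intermediate_value_Icc zero_le_one (by fun_prop) (by simpa [ha] using hx)
  refine ⟨y, Set.mem_iInter.2 fun n =>
    mem_preCantorR_of_forall_notMem_gap h0 n hy fun w hyw => hgap w ⟨?_, ?_⟩, rfl⟩
  · have hleft := cantorWordMap_mem_Icc h0 h1 w ⟨h0.le, h1⟩
    exact pow_lt_pow_left₀ hyw.1 hleft.1 ha
  · exact pow_lt_pow_left₀ hyw.2 hy.1 ha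

theorem exists_sum_pow_eq_of_mem_cantorSetR (h0 : 0 < r) (h1 : r < 1 / 2) {a : ℕ} (ha : a ≠ 0)
    {κ : Type*} [Fintype κ] (hκ : ((1 - r) / r) ^ a ≤ Fintype.card κ) {T : ℝ}
    (hT : T ∈ Set.Icc (0 : ℝ) (Fintype.card κ)) :
    ∃ y : κ → ℝ, (∀ i, y i ∈ cantorSetR r) ∧ ∑ i, y i ^ a = T := by
  have hcard : 1 ≤ (Fintype.card κ - 1) * cantorPowThickness r a := by
    rw [cantorPowThickness, ← div_eq_mul_inv,
      one_le_div (sub_pos.2 (one_lt_one_sub_div_pow h0 h1 ha))]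
    linarith
  obtain ⟨x, hx, hgap, rfl⟩ := (isThickGapFamily_cantor_pow h0 h1 ha).exists_sum_eq hcard
    (by simpa using hT)
  choose y hy hyx using fun i => exists_mem_cantorSetR_pow_eq h0 (by linarith) ha (hx i) (hgap i)
  exact ⟨y, hy, by simp only [hyx]⟩

end CantorGaps

theorem imageOn_subset_Icc {S : Set ℝ} (hS : S ⊆ Set.Icc 0 1) (a b m : ℕ) :
    imageOn a b m S ⊆ Set.Icc (0 : ℝ) m := by
  rintro _ ⟨x, hx, rfl⟩
  have hpow (i n : ℕ) : x i ^ n ∈ Set.Icc (0 : ℝ) 1 :=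
    ⟨pow_nonneg (hS (hx i)).1 n, pow_le_one₀ (hS (hx i)).1 (hS (hx i)).2⟩
  refine ⟨Finset.sum_nonneg fun i _ => mul_nonneg (hpow _ _).1 (hpow _ _).1, ?_⟩
  calc pairSum a b m x ≤ ∑ _i ∈ Finset.range m, (1 : ℝ) :=
        Finset.sum_le_sum fun i _ => mul_le_one₀ (hpow _ _).2 (hpow _ _).1 (hpow _ _).2
    _ = m := by simp

theorem sum_pow_mem_imageOn {S : Set ℝ} (hS : 1 ∈ S) (a b : ℕ) {m : ℕ} {y : Fin m → ℝ}
    (hy : ∀ i, y i ∈ S) : ∑ i, y i ^ a ∈ imageOn a b m S := by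
  let x (j : ℕ) : ℝ := if h : Even j ∧ j / 2 < m then y ⟨j / 2, h.2⟩ else 1
  refine ⟨x, fun j => ?_, ?_⟩
  · simp only [x]
    split_ifs
    exacts [hy _, hS]
  · simp [pairSum, Finset.sum_range, x]

theorem stmt_13_general {r : ℝ} (h0 : 0 < r) (h1 : r < 1 / 2) {a : ℕ} (ha : a ≠ 0) (b : ℕ)
    {k : ℕ} (hk : Even k) (hkge : 2 * ((1 - r) / r) ^ a ≤ k) :
    Set.Icc (0 : ℝ) ((k : ℝ) / 2) = imageOn a b (k / 2) (cantorSetR r) := by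
  rw [← Nat.cast_ofNat, ← Nat.cast_div_charZero hk.two_dvd]
  refine Set.Subset.antisymm (fun T hT => ?_) (imageOn_subset_Icc (cantorSetR_subset_Icc r) a b _)
  have hm : ((1 - r) / r) ^ a ≤ (k / 2 : ℕ) := by
    rw [Nat.cast_div_charZero hk.two_dvd, Nat.cast_ofNat]
    linarith
  obtain ⟨y, hy, rfl⟩ := exists_sum_pow_eq_of_mem_cantorSetR h0 h1 ha (κ := Fin (k / 2))
    (by simpa using hm) (by simpa using hT)
  exact sum_pow_mem_imageOn (one_mem_cantorSetR r) a b hy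

theorem middle_cantor_ratio_mem_Ioo {α : ℝ} (hα : 1 < α) :
    (1 - 1 / α) / 2 ∈ Set.Ioo (0 : ℝ) (1 / 2) := by
  have hpos : 0 < 1 / α := by positivity
  have hlt : 1 / α < 1 := (div_lt_one (by positivity)).2 hα
  constructor <;> linarith

/-- Fundamental theorem: for `a ≤ b`, `s = a + b ≥ 2` and `k` even and large enough,
`[0, k/2] = f_{k,a,b}(C_α^k)`. -/
theorem stmt_13 (α r : ℝ) (hα : 1 < α) (hr : r = (1 - 1/α) / 2)
    (a b s : ℕ) (ha : 0 < a) (hb : 0 < b) (hab : a ≤ b) (hs : s = a + b) (hs2 : 2 ≤ s)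
    (k : ℕ) (hk : Even k) (hkpos : 0 < k)
    (hkge : (k : ℝ) ≥
      max (max
        ((⌈2 * ((1 - r + r ^ nstar r a) ^ (a - 1) *
              ((b : ℝ) * (1 - r + r ^ nstar r a) + a)) /
            ((1 - r) ^ (a - 1) * (1 - r ^ nstar r a) ^ (b - 1) *
              ((b : ℝ) * (1 - r) + (a : ℝ) * (1 - r ^ nstar r a))) + 2⌉ : ℤ) *
          ((1 - r) / r) ^ a)
        (2 * ((1 - r) / r) ^ (a + 1)))
        (2 * (1 / (1 - r)) ^ (s - 1) + 2)) :
    Set.Icc (0 : ℝ) ((k : ℝ) / 2) = imageOn a b (k / 2) (cantorSetR r) := by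
  obtain ⟨h0, h1⟩ : r ∈ Set.Ioo (0 : ℝ) (1 / 2) := hr ▸ middle_cantor_ratio_mem_Ioo hα
  have hratio : 1 ≤ (1 - r) / r := (one_le_div h0).2 (by linarith)
  have hpow : ((1 - r) / r) ^ a ≤ ((1 - r) / r) ^ (a + 1) := pow_le_pow_right₀ hratio a.le_succ
  have hkge' : 2 * ((1 - r) / r) ^ (a + 1) ≤ k :=
    (le_max_right _ _).trans ((le_max_left _ _).trans hkge)
  exact stmt_13_general h0 h1 ha.ne' b hk (by linarith)
end

section
/- For the Cantor ternary set C, positive integers a, b with s = a + b ≥ 2, and any even k with k ≥ ⌈(1 + 3/(2a))^{a-1}/(1 - 1/a)^{b-1}·(1 + (1 + b/a)/(2b/3 + a - 1)) + 1⌉·2^{a+1}, one has [0, k/2] = { x₁^a x₂^b + x₃^a x₄^b + ⋯ + x_{k-1}^a x_k^b : x₁,…,x_k ∈ C }. -/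
/-!
Setting every second variable to `1` reduces the claim to showing that sums of `m` powers `x ^ a`
with `x ∈ C` fill `[0, m]`. On a short cylinder `[c, c + δ]` of `C` the slopes of `x ^ a` vary by
a factor at most `p - 1`, so when one of `p` variables jumps over the middle third of its cylinder,
the overshoot is at most what the other variables gain by moving along one third of theirs. Refining
thirds in this way, `p` or more powers fill the whole interval between their extreme sums, and the
intervals for `p`, `p + 1`, ..., `m` nonzero powers overlap. Two cylinders of length about `1 / a`,
at the ends of `[2/3, 1]`, then cover `[m / 3 ^ a, m]`, and the similarity `x ↦ x / 3` of `C`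
takes care of the rest of `[0, m]`.
-/

section CantorSet

theorem preCantorR_one_third (n : ℕ) : preCantorR (1 / 3) n = preCantorSet n := by
  induction n with
  | zero => rfl
  | succ n ih =>
    rw [preCantorR, preCantorSet_succ, ih]
    congr 2 <;> funext x <;> ring

theorem cantorTernary_eq_cantorSet : cantorTernary = cantorSet := by
  simp only [cantorTernary, cantorSetR, cantorSet, preCantorR_one_third]

theorem one_mem_cantorSet : (1 : ℝ) ∈ cantorSet := by
  have one_mem_preCantorSet (n : ℕ) : (1 : ℝ) ∈ preCantorSet n := by
    induction n with
    | zero => simp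
    | succ n ih => exact Or.inr ⟨1, ih, by norm_num⟩
  exact Set.mem_iInter.2 one_mem_preCantorSet

/-- The interval `[c, c + δ]` carries an affine copy `c + δ C` of the Cantor set `C` inside `C`,
as do the intervals of the successive stages of its construction. -/
structure IsCantorCylinder (c δ : ℝ) : Prop where
  nonneg : 0 ≤ δ
  add_mul_mem : ∀ w ∈ cantorSet, c + δ * w ∈ cantorSet

namespace IsCantorCylinder

variable {c δ : ℝ}

theorem zero_one : IsCantorCylinder 0 1 := ⟨zero_le_one, by simp⟩

theorem le_add (h : IsCantorCylinder c δ) : c ≤ c + δ := le_add_of_nonneg_right h.nonneg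

theorem left_mem (h : IsCantorCylinder c δ) : c ∈ cantorSet := by
  simpa using h.add_mul_mem 0 zero_mem_cantorSet

theorem right_mem (h : IsCantorCylinder c δ) : c + δ ∈ cantorSet := by
  simpa using h.add_mul_mem 1 one_mem_cantorSet

theorem left_third (h : IsCantorCylinder c δ) : IsCantorCylinder c (δ / 3) where
  nonneg := div_nonneg h.nonneg zero_le_three
  add_mul_mem w hw := by
    have hw' : w / 3 ∈ cantorSet := by
      rw [cantorSet_eq_union_halves]
      exact Or.inl ⟨w, hw, rfl⟩
    convert h.add_mul_mem _ hw' using 1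
    ring

theorem right_third (h : IsCantorCylinder c δ) :
    IsCantorCylinder (c + 2 * (δ / 3)) (δ / 3) where
  nonneg := div_nonneg h.nonneg zero_le_three
  add_mul_mem w hw := by
    have hw' : (2 + w) / 3 ∈ cantorSet := by
      rw [cantorSet_eq_union_halves]
      exact Or.inr ⟨w, hw, rfl⟩
    convert h.add_mul_mem _ hw' using 1
    ring

theorem left_div_three_pow (h : IsCantorCylinder c δ) (n : ℕ) :
    IsCantorCylinder c (δ / 3 ^ n) := by
  induction n with
  | zero => simpa using h
  | succ n ih => simpa only [pow_succ, div_div] using ih.left_third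

theorem two_thirds (n : ℕ) : IsCantorCylinder (2 / 3) (1 / 3 ^ (n + 1)) := by
  convert zero_one.right_third.left_div_three_pow n using 1
  · norm_num
  · rw [pow_succ', div_div]

theorem one_sub (n : ℕ) : IsCantorCylinder (1 - 1 / 3 ^ n) (1 / 3 ^ n) := by
  induction n with
  | zero => simpa using zero_one
  | succ n ih =>
    convert ih.right_third using 1
    · rw [pow_succ]
      ring
    · rw [pow_succ, div_div]

end IsCantorCylinder

theorem div_three_pow_mem_cantorSet (n : ℕ) {w : ℝ} (hw : w ∈ cantorSet) :
    w / 3 ^ n ∈ cantorSet := by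
  convert (IsCantorCylinder.zero_one.left_div_three_pow n).add_mul_mem w hw using 1
  ring

end CantorSet

section SlopeBounds

/-- All difference quotients of `f` between points of `I` lie in `[μ, M]`. -/
structure HasSlopeBounds (f : ℝ → ℝ) (I : Set ℝ) (μ M : ℝ) : Prop where
  mul_sub_le : ∀ x ∈ I, ∀ y ∈ I, x ≤ y → μ * (y - x) ≤ f y - f x
  le_mul_sub : ∀ x ∈ I, ∀ y ∈ I, x ≤ y → f y - f x ≤ M * (y - x)

namespace HasSlopeBounds

variable {f : ℝ → ℝ} {I : Set ℝ} {μ M : ℝ}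

theorem continuousOn (H : HasSlopeBounds f I μ M) (hμ : 0 ≤ μ) : ContinuousOn f I := by
  refine (LipschitzOnWith.of_le_add_mul M.toNNReal fun x hx y hy => ?_).continuousOn
  rcases le_total x y with hxy | hyx
  · have hmono : 0 ≤ f y - f x :=
      (mul_nonneg hμ (sub_nonneg.2 hxy)).trans (H.mul_sub_le x hx y hy hxy)
    have hdist : 0 ≤ M.toNNReal * dist x y := by positivity
    linarith
  · have hle : M * (x - y) ≤ M.toNNReal * (x - y) :=
      mul_le_mul_of_nonneg_right (Real.le_coe_toNNReal M) (sub_nonneg.2 hyx)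
    rw [Real.dist_eq, abs_of_nonneg (sub_nonneg.2 hyx)]
    linarith [H.le_mul_sub y hy x hx hyx]

theorem pow {c d : ℝ} (hc : 0 ≤ c) (n : ℕ) :
    HasSlopeBounds (· ^ n) (Set.Icc c d) (n * c ^ (n - 1)) (n * d ^ (n - 1)) where
  mul_sub_le := by
    refine (convex_Icc c d).mul_sub_le_image_sub_of_le_deriv (by fun_prop) (by fun_prop)
      fun x hx => ?_
    have hcx : c ≤ x := (interior_subset hx).1
    rw [deriv_pow_field]
    gcongr
  le_mul_sub := by
    refine (convex_Icc c d).image_sub_le_mul_sub_of_deriv_le (by fun_prop) (by fun_prop)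
      fun x hx => ?_
    obtain ⟨hcx, hxd⟩ := interior_subset hx
    have hx0 : 0 ≤ x := hc.trans hcx
    rw [deriv_pow_field]
    gcongr

/-- The jump of one variable over a gap of length `e` is absorbed by moves of length `e` of all
the others. -/
theorem sum_update_le_sum_add {ι : Type*} [DecidableEq ι] {s : Finset ι} {w : ι → ℝ} {e : ℝ}
    {j : ι} (H : HasSlopeBounds f I μ M) (hM : M ≤ (s.card - 1) * μ) (he : 0 ≤ e)
    (hw : ∀ i ∈ s, w i ∈ I) (hwe : ∀ i ∈ s, w i + e ∈ I) (hj : j ∈ s) (hj' : w j + 2 * e ∈ I) :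
    ∑ i ∈ s, f (Function.update w j (w j + 2 * e) i) ≤ ∑ i ∈ s, f (w i + e) := by
  have jump : f (w j + 2 * e) - f (w j + e) ≤ M * e := by
    have gap : w j + 2 * e - (w j + e) = e := by ring
    simpa only [gap] using H.le_mul_sub _ (hwe j hj) _ hj' (by linarith)
  have others : (s.card - 1) * μ * e ≤ ∑ i ∈ s.erase j, (f (w i + e) - f (w i)) := by
    calc (s.card - 1) * μ * e = ∑ _i ∈ s.erase j, μ * e := by
          rw [Finset.sum_const, nsmul_eq_mul, Finset.cast_card_erase_of_mem hj, mul_assoc]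
      _ ≤ _ := Finset.sum_le_sum fun i hi => by
          have his := Finset.mem_of_mem_erase hi
          simpa only [add_sub_cancel_left] using
            H.mul_sub_le _ (hw i his) _ (hwe i his) (by linarith)
  have unchanged : ∑ i ∈ s.erase j, f (Function.update w j (w j + 2 * e) i)
      = ∑ i ∈ s.erase j, f (w i) :=
    Finset.sum_congr rfl fun i hi => by rw [Function.update_of_ne (Finset.ne_of_mem_erase hi)]
  rw [← Finset.add_sum_erase s _ hj, ← Finset.add_sum_erase s _ hj, unchanged,
    Function.update_self]
  rw [Finset.sum_sub_distrib] at others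
  linarith [mul_le_mul_of_nonneg_right hM he]

end HasSlopeBounds

end SlopeBounds

section CantorBracket

/-- Cylinders `[z i, z i + h]` of one and the same length `h` inside `I`, such that `t` lies
between the sums over `s` of the values of `f` at their left and at their right endpoints. -/
structure CantorBracket {ι : Type*} (f : ℝ → ℝ) (I : Set ℝ) (s : Finset ι) (t h : ℝ)
    (z : ι → ℝ) : Prop where
  cylinder : ∀ i, IsCantorCylinder (z i) h
  subset : ∀ i, Set.Icc (z i) (z i + h) ⊆ I
  sum_le : ∑ i ∈ s, f (z i) ≤ t
  le_sum : t ≤ ∑ i ∈ s, f (z i + h)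

namespace CantorBracket

variable {ι : Type*} {f : ℝ → ℝ} {I : Set ℝ} {s : Finset ι} {t h μ M : ℝ} {z : ι → ℝ}

theorem exists_thirds (B : CantorBracket f I s t h z) (H : HasSlopeBounds f I μ M)
    (hM : M ≤ (s.card - 1) * μ) :
    ∃ z' : ι → ℝ, (∀ i, z' i = z i ∨ z' i = z i + 2 * (h / 3)) ∧
      ∑ i ∈ s, f (z' i) ≤ t ∧ t ≤ ∑ i ∈ s, f (z' i + h / 3) := by
  classical
  -- Move the cylinders of `r` to their right thirds one at a time: consecutive brackets overlap.
  let w (r : Finset ι) : ι → ℝ := r.piecewise (fun i => z i + 2 * (h / 3)) z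
  have hw (r : Finset ι) (i : ι) : w r i = z i ∨ w r i = z i + 2 * (h / 3) := by
    by_cases hi : i ∈ r <;> simp [w, hi]
  have hh (i : ι) : 0 ≤ h := (B.cylinder i).nonneg
  have hwI (r : Finset ι) (i : ι) : w r i ∈ I ∧ w r i + h / 3 ∈ I := by
    rcases hw r i with hi | hi <;> rw [hi] <;>
      exact ⟨B.subset i ⟨by linarith [hh i], by linarith [hh i]⟩,
        B.subset i ⟨by linarith [hh i], by linarith [hh i]⟩⟩
  have bracket_of_le (r : Finset ι) (hr : r ⊆ s) (ht : t ≤ ∑ i ∈ s, f (w r i + h / 3)) :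
      ∃ r', ∑ i ∈ s, f (w r' i) ≤ t ∧ t ≤ ∑ i ∈ s, f (w r' i + h / 3) := by
    induction r using Finset.induction_on with
    | empty => exact ⟨∅, by simpa [w] using B.sum_le, ht⟩
    | insert j r hjr ih =>
      obtain ⟨hjs, hrs⟩ := Finset.insert_subset_iff.1 hr
      by_cases htr : t ≤ ∑ i ∈ s, f (w r i + h / 3)
      · exact ih hrs htr
      have hwj : w r j = z j := Finset.piecewise_eq_of_notMem _ _ _ hjr
      have hinsert : w (insert j r) = Function.update (w r) j (w r j + 2 * (h / 3)) := by
        rw [hwj]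
        exact Finset.piecewise_insert ..
      have overlap : ∑ i ∈ s, f (w (insert j r) i) ≤ ∑ i ∈ s, f (w r i + h / 3) := by
        rw [hinsert]
        refine H.sum_update_le_sum_add hM (by linarith [hh j]) (fun i _ => (hwI r i).1)
          (fun i _ => (hwI r i).2) hjs (B.subset j ?_)
        rw [hwj]
        constructor <;> linarith [hh j]
      exact ⟨insert j r, overlap.trans (not_le.1 htr).le, ht⟩
  obtain ⟨r, hr⟩ := bracket_of_le s subset_rfl <| B.le_sum.trans_eq <|
    Finset.sum_congr rfl fun i hi => by
      rw [show w s i = z i + 2 * (h / 3) from Finset.piecewise_eq_of_mem _ _ _ hi]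
      ring_nf
  exact ⟨w r, hw r, hr⟩

theorem exists_div_three (B : CantorBracket f I s t h z) (H : HasSlopeBounds f I μ M)
    (hM : M ≤ (s.card - 1) * μ) : ∃ z', CantorBracket f I s t (h / 3) z' := by
  obtain ⟨z', hz', hle, hge⟩ := B.exists_thirds H hM
  refine ⟨z', fun i => ?_, fun i => ?_, hle, hge⟩
  · rcases hz' i with hi | hi <;> rw [hi]
    exacts [(B.cylinder i).left_third, (B.cylinder i).right_third]
  · have hh := (B.cylinder i).nonneg
    refine (Set.Icc_subset_Icc ?_ ?_).trans (B.subset i) <;>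
      rcases hz' i with hi | hi <;> linarith

theorem sub_le_sum (B : CantorBracket f I s t h z) (H : HasSlopeBounds f I μ M) :
    t - s.card * (M * h) ≤ ∑ i ∈ s, f (z i) := by
  have variation : ∑ i ∈ s, (f (z i + h) - f (z i)) ≤ s.card * (M * h) := by
    rw [← nsmul_eq_mul]
    refine Finset.sum_le_card_nsmul _ _ _ fun i _ => ?_
    have hi : z i ≤ z i + h := (B.cylinder i).le_add
    simpa only [add_sub_cancel_left] using H.le_mul_sub _ (B.subset i (Set.left_mem_Icc.2 hi)) _
      (B.subset i (Set.right_mem_Icc.2 hi)) hi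
  rw [Finset.sum_sub_distrib] at variation
  linarith [B.le_sum]

end CantorBracket

end CantorBracket

section CantorSums

/-- The set of sums `f (x 0) + ⋯ + f (x (m - 1))` with `m` terms, all `x i` in the Cantor set.
As in `imageOn`, the `x i` are given by a sequence whose further terms are irrelevant. -/
def cantorSums (f : ℝ → ℝ) (m : ℕ) : Set ℝ :=
  {t | ∃ x : ℕ → ℝ, (∀ i, x i ∈ cantorSet) ∧ ∑ i ∈ Finset.range m, f (x i) = t}

theorem cantorSums_subset_succ {f : ℝ → ℝ} (hf : f 0 = 0) (m : ℕ) :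
    cantorSums f m ⊆ cantorSums f (m + 1) := by
  rintro _ ⟨x, hx, rfl⟩
  refine ⟨Function.update x m 0, fun i => ?_, ?_⟩
  · by_cases hi : i = m
    · simp [hi, zero_mem_cantorSet]
    · simp [hi, hx i]
  · rw [Finset.sum_range_succ, Function.update_self, hf, add_zero]
    exact Finset.sum_congr rfl fun i hi => by
      rw [Function.update_of_ne (Finset.mem_range.1 hi).ne]

theorem Icc_subset_cantorSums {f : ℝ → ℝ} {c δ μ M : ℝ} {m : ℕ} (hc : IsCantorCylinder c δ)
    (H : HasSlopeBounds f (Set.Icc c (c + δ)) μ M) (hμ : 0 ≤ μ) (hM : M ≤ (m - 1) * μ) :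
    Set.Icc (m * f c) (m * f (c + δ)) ⊆ cantorSums f m := by
  rintro t ⟨hct, htc⟩
  have brackets (n : ℕ) :
      ∃ z, CantorBracket f (Set.Icc c (c + δ)) (Finset.range m) t (δ / 3 ^ n) z := by
    induction n with
    | zero =>
      exact ⟨fun _ => c, fun _ => by simpa using hc, fun _ => by simp, by simpa using hct,
        by simpa using htc⟩
    | succ n ih =>
      obtain ⟨z, hz⟩ := ih
      simpa only [pow_succ, div_div] using hz.exists_div_three H (by simpa using hM)
  choose z hz using brackets
  let K : Set (ℕ → ℝ) := Set.univ.pi fun _ => cantorSet ∩ Set.Icc c (c + δ)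
  have hK : IsCompact K :=
    isCompact_univ_pi fun _ => isCompact_cantorSet.inter_right isClosed_Icc
  have hcont : ContinuousOn (fun x : ℕ → ℝ => ∑ i ∈ Finset.range m, f (x i)) K :=
    continuousOn_finsetSum _ fun i _ => (H.continuousOn hμ).comp
      (continuous_apply i).continuousOn fun x hx => (hx i trivial).2
  have hzK (n : ℕ) : z n ∈ K := fun i _ =>
    ⟨((hz n).cylinder i).left_mem,
      (hz n).subset i (Set.left_mem_Icc.2 ((hz n).cylinder i).le_add)⟩
  have hlim : Filter.Tendsto (fun n => ∑ i ∈ Finset.range m, f (z n i)) Filter.atTop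
      (nhds t) := by
    have hlower : Filter.Tendsto (fun n : ℕ => t - m * (M * (δ / 3 ^ n))) Filter.atTop
        (nhds t) := by
      have hpow : Filter.Tendsto (fun n : ℕ => δ / 3 ^ n) Filter.atTop (nhds 0) :=
        tendsto_const_nhds.div_atTop (tendsto_pow_atTop_atTop_of_one_lt (by norm_num))
      simpa using ((hpow.const_mul M).const_mul (m : ℝ)).const_sub t
    exact tendsto_of_tendsto_of_tendsto_of_le_of_le hlower tendsto_const_nhds
      (fun n => by simpa using (hz n).sub_le_sum H) fun n => (hz n).sum_le
  obtain ⟨x, hx, hxt⟩ := (hK.image_of_continuousOn hcont).isClosed.mem_of_tendsto hlim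
    (Filter.Eventually.of_forall fun n => ⟨z n, hzK n, rfl⟩)
  exact ⟨x, fun i => (hx i trivial).1, hxt⟩

/-- The intervals filled by `p`, `p + 1`, ..., `m` nonzero summands overlap. -/
theorem Icc_subset_cantorSums_of_le {f : ℝ → ℝ} {c δ μ M : ℝ} {p m : ℕ}
    (hc : IsCantorCylinder c δ) (H : HasSlopeBounds f (Set.Icc c (c + δ)) μ M) (hμ : 0 ≤ μ)
    (hM : M ≤ (p - 1) * μ) (hf : f 0 = 0) (hoverlap : f c ≤ p * (f (c + δ) - f c)) (hpm : p ≤ m) :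
    Set.Icc (p * f c) (m * f (c + δ)) ⊆ cantorSums f m := by
  have hmono : 0 ≤ f (c + δ) - f c :=
    (mul_nonneg hμ (sub_nonneg.2 hc.le_add)).trans <|
      H.mul_sub_le _ (Set.left_mem_Icc.2 hc.le_add) _ (Set.right_mem_Icc.2 hc.le_add) hc.le_add
  induction m, hpm using Nat.le_induction with
  | base => exact Icc_subset_cantorSums hc H hμ hM
  | succ m hpm ih =>
    rintro t ⟨hct, htc⟩
    have hpm' : (p : ℝ) ≤ m := by exact_mod_cast hpm
    by_cases htm : t ≤ m * f (c + δ)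
    · exact cantorSums_subset_succ hf m (ih ⟨hct, htm⟩)
    · refine Icc_subset_cantorSums hc H hμ ?_ ⟨?_, htc⟩
      · push_cast
        exact hM.trans (by gcongr; linarith)
      · push_cast
        linarith [mul_le_mul_of_nonneg_right hpm' hmono]

end CantorSums

section PowerSums

theorem three_mul_sub_one_le_mul {n p : ℕ} (hn : 0 < n)
    (hp : (1 + 3 / (2 * (n : ℝ))) ^ (n - 1) + 1 ≤ p) : (3 * n - 1 : ℝ) ≤ p * n := by
  have hn1 : (1 : ℝ) ≤ n := by exact_mod_cast hn
  have bernoulli : 1 + (n - 1) * (3 / (2 * (n : ℝ))) ≤ (1 + 3 / (2 * (n : ℝ))) ^ (n - 1) := by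
    have hx : (0 : ℝ) ≤ 3 / (2 * n) := by positivity
    simpa [Nat.cast_pred hn] using one_add_mul_le_pow (by linarith : -2 ≤ 3 / (2 * (n : ℝ))) (n - 1)
  calc (3 * n - 1 : ℝ) ≤ (1 + (n - 1) * (3 / (2 * n)) + 1) * n := by
        field_simp
        linarith
    _ ≤ p * n := by gcongr; linarith

theorem Icc_subset_cantorSums_pow {c δ : ℝ} {n p m : ℕ} (hn : 0 < n)
    (hc : IsCantorCylinder c δ) (hc0 : 2 / 3 ≤ c) (hδ : 1 ≤ 3 * n * δ) (hδ' : n * δ ≤ 1)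
    (hp : (1 + 3 / (2 * (n : ℝ))) ^ (n - 1) + 1 ≤ p) (hpm : p ≤ m) :
    Set.Icc (p * c ^ n) (m * (c + δ) ^ n) ⊆ cantorSums (· ^ n) m := by
  have hc_nonneg : 0 ≤ c := le_trans (by norm_num) hc0
  have hδ0 : 0 ≤ δ := hc.nonneg
  have hcδ : c + δ ≤ 1 := (cantorSet_subset_unitInterval hc.right_mem).2
  have H := HasSlopeBounds.pow (d := c + δ) hc_nonneg n
  refine Icc_subset_cantorSums_of_le hc H (by positivity) ?_ (zero_pow hn.ne') ?_ hpm
  · have hratio : c + δ ≤ (1 + 3 / (2 * (n : ℝ))) * c := by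
      have hδc : δ ≤ 3 / (2 * (n : ℝ)) * c := by
        calc δ ≤ 3 / (2 * (n : ℝ)) * (2 / 3) := by field_simp; linarith
          _ ≤ 3 / (2 * (n : ℝ)) * c := by gcongr
      linarith
    calc (n : ℝ) * (c + δ) ^ (n - 1)
        ≤ n * ((1 + 3 / (2 * (n : ℝ))) * c) ^ (n - 1) := by gcongr
      _ = (1 + 3 / (2 * (n : ℝ))) ^ (n - 1) * (n * c ^ (n - 1)) := by rw [mul_pow]; ring
      _ ≤ (p - 1) * (n * c ^ (n - 1)) := by gcongr; linarith
  · have hc_le : c ≤ p * n * δ := by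
      linarith [mul_le_mul_of_nonneg_right (three_mul_sub_one_le_mul hn hp) hδ0]
    calc c ^ n = c * c ^ (n - 1) := (mul_pow_sub_one hn.ne' c).symm
      _ ≤ p * n * δ * c ^ (n - 1) := by gcongr
      _ = p * (n * c ^ (n - 1) * (c + δ - c)) := by ring
      _ ≤ p * ((c + δ) ^ n - c ^ n) := by
        gcongr
        exact H.mul_sub_le c (Set.left_mem_Icc.2 hc.le_add) _ (Set.right_mem_Icc.2 hc.le_add)
          hc.le_add

theorem Icc_div_three_pow_subset_cantorSums_pow {n p m : ℕ} (hn : 0 < n)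
    (hp : (1 + 3 / (2 * (n : ℝ))) ^ (n - 1) + 1 ≤ p) (hpm : p * 2 ^ n ≤ m) :
    Set.Icc (m / 3 ^ n : ℝ) m ⊆ cantorSums (· ^ n) m := by
  rintro t ⟨hmt, htm⟩
  have hpm' : p ≤ m := le_trans (Nat.le_mul_of_pos_right p (by positivity)) hpm
  have hpmR : p * (2 / 3 : ℝ) ^ n ≤ m / 3 ^ n := by
    rw [div_pow, mul_div_assoc']
    gcongr
    exact_mod_cast hpm
  obtain ⟨k, hk, hk'⟩ := exists_nat_pow_near (x := (n : ℝ)) (y := 3)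
    (by exact_mod_cast hn) (by norm_num)
  obtain ⟨δ, hδ⟩ : ∃ δ : ℝ, δ = 1 / 3 ^ (k + 1) := ⟨_, rfl⟩
  have hδ1 : 1 ≤ 3 * n * δ := by
    rw [hδ, mul_one_div, one_le_div (by positivity), pow_succ']
    gcongr
  have hδ2 : n * δ ≤ 1 := by
    rw [hδ, mul_one_div]
    exact div_le_one_of_le₀ hk'.le (by positivity)
  have hδ3 : δ ≤ 1 / 3 := by
    rw [hδ]
    gcongr
    exact le_self_pow₀ (by norm_num) (by simp)
  have hlow : IsCantorCylinder (2 / 3) δ := hδ ▸ .two_thirds k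
  have hhigh : IsCantorCylinder (1 - δ) δ := hδ ▸ .one_sub (k + 1)
  by_cases ht : t ≤ m * (2 / 3 + δ) ^ n
  · exact Icc_subset_cantorSums_pow hn hlow le_rfl hδ1 hδ2 hp hpm' ⟨hpmR.trans hmt, ht⟩
  · refine Icc_subset_cantorSums_pow hn hhigh (by linarith) hδ1 hδ2 hp hpm' ⟨?_, by simpa using htm⟩
    calc p * (1 - δ) ^ n ≤ p * (2 * (2 / 3)) ^ n := by
          gcongr
          · linarith
          · linarith [hlow.nonneg]
      _ = p * 2 ^ n * (2 / 3) ^ n := by rw [mul_pow, mul_assoc]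
      _ ≤ m * (2 / 3 + δ) ^ n := by
          gcongr
          · exact_mod_cast hpm
          · linarith [hlow.nonneg]
      _ ≤ t := (not_le.1 ht).le

theorem mem_cantorSums_pow_of_mul_mem {n m : ℕ} {t : ℝ} (j : ℕ)
    (ht : (3 ^ n) ^ j * t ∈ cantorSums (· ^ n) m) : t ∈ cantorSums (· ^ n) m := by
  obtain ⟨x, hx, hxt⟩ := ht
  refine ⟨fun i => x i / 3 ^ j, fun i => div_three_pow_mem_cantorSet j (hx i), ?_⟩
  simp only [div_pow]
  rw [← Finset.sum_div, hxt, pow_right_comm, mul_div_cancel_left₀ _ (by positivity)]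

theorem Icc_zero_subset_cantorSums_pow {n p m : ℕ} (hn : 0 < n)
    (hp : (1 + 3 / (2 * (n : ℝ))) ^ (n - 1) + 1 ≤ p) (hpm : p * 2 ^ n ≤ m) :
    Set.Icc (0 : ℝ) m ⊆ cantorSums (· ^ n) m := by
  rintro t ⟨ht0, htm⟩
  rcases ht0.eq_or_lt with rfl | htpos
  · exact ⟨fun _ => 0, fun _ => zero_mem_cantorSet, by simp [hn.ne']⟩
  obtain ⟨j, hj, hj'⟩ := exists_nat_pow_near (x := (m : ℝ) / t) (y := 3 ^ n)
    ((one_le_div htpos).2 htm) (one_lt_pow₀ (by norm_num) hn.ne')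
  rw [le_div_iff₀ htpos] at hj
  rw [div_lt_iff₀ htpos, pow_succ, mul_right_comm] at hj'
  exact mem_cantorSums_pow_of_mul_mem j <|
    Icc_div_three_pow_subset_cantorSums_pow hn hp hpm
      ⟨div_le_of_le_mul₀ (by positivity) (by positivity) hj'.le, hj⟩

theorem Icc_zero_subset_cantorSums_id {m : ℕ} (hm : 2 ≤ m) :
    Set.Icc (0 : ℝ) m ⊆ cantorSums id m := by
  have hm' : (2 : ℝ) ≤ m := by exact_mod_cast hm
  have H : HasSlopeBounds id (Set.Icc 0 (0 + 1)) 1 1 := ⟨by simp, by simp⟩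
  simpa using Icc_subset_cantorSums .zero_one H zero_le_one (by linarith)

end PowerSums

section PairSums

theorem imageOn_cantorSet_subset_Icc (a b m : ℕ) :
    imageOn a b m cantorSet ⊆ Set.Icc (0 : ℝ) m := by
  rintro _ ⟨x, hx, rfl⟩
  have hpow (i n : ℕ) : x i ^ n ∈ Set.Icc (0 : ℝ) 1 := by
    obtain ⟨hx0, hx1⟩ := cantorSet_subset_unitInterval (hx i)
    exact ⟨pow_nonneg hx0 n, pow_le_one₀ hx0 hx1⟩
  refine ⟨Finset.sum_nonneg fun i _ => mul_nonneg (hpow _ a).1 (hpow _ b).1, ?_⟩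
  simpa [pairSum] using Finset.sum_le_card_nsmul (Finset.range m) _ 1 fun i _ =>
    mul_le_one₀ (hpow (2 * i) a).2 (hpow (2 * i + 1) b).1 (hpow (2 * i + 1) b).2

theorem cantorSums_pow_subset_imageOn (a b m : ℕ) :
    cantorSums (· ^ a) m ⊆ imageOn a b m cantorSet := by
  rintro _ ⟨u, hu, rfl⟩
  refine ⟨fun i => if Even i then u (i / 2) else 1, fun i => ?_, ?_⟩
  · dsimp only
    split_ifs
    exacts [hu _, one_mem_cantorSet]
  · simp [pairSum]

/-- The real number in terms of which the required number of variables is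
`⌈pairBound a b + 1⌉ * 2 ^ (a + 1)`. For `a = 1 < b` the division by zero makes it `0`. -/
noncomputable def pairBound (a b : ℕ) : ℝ :=
  (1 + 3 / (2 * (a : ℝ))) ^ (a - 1) / (1 - 1 / (a : ℝ)) ^ (b - 1) *
    (1 + (1 + (b : ℝ) / a) / ((b : ℝ) * (2 / 3) + (a : ℝ) - 1))

theorem one_le_pairBound_factor {a : ℕ} (ha : 0 < a) (b : ℕ) :
    1 ≤ 1 + (1 + (b : ℝ) / a) / ((b : ℝ) * (2 / 3) + (a : ℝ) - 1) := by
  have ha1 : (1 : ℝ) ≤ a := by exact_mod_cast ha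
  have hb : (0 : ℝ) ≤ b * (2 / 3) := by positivity
  exact le_add_of_nonneg_right (div_nonneg (by positivity) (by linarith [hb, ha1]))

theorem pairBound_nonneg {a : ℕ} (ha : 0 < a) (b : ℕ) : 0 ≤ pairBound a b := by
  have hbase : (0 : ℝ) ≤ 1 - 1 / a := by
    simpa using inv_le_one_of_one_le₀ (by exact_mod_cast ha : (1 : ℝ) ≤ a)
  exact mul_nonneg (div_nonneg (by positivity) (pow_nonneg hbase _))
    (zero_le_one.trans (one_le_pairBound_factor ha b))

theorem pow_le_pairBound {a : ℕ} (ha : 1 < a) (b : ℕ) :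
    (1 + 3 / (2 * (a : ℝ))) ^ (a - 1) ≤ pairBound a b := by
  have hbase : (0 : ℝ) < 1 - 1 / a := by
    simpa using inv_lt_one_of_one_lt₀ (by exact_mod_cast ha : (1 : ℝ) < a)
  have hbase' : 1 - 1 / (a : ℝ) ≤ 1 := sub_le_self _ (by positivity)
  have hdiv := le_div_self (a := (1 + 3 / (2 * (a : ℝ))) ^ (a - 1)) (by positivity)
    (pow_pos hbase (b - 1)) (pow_le_one₀ hbase.le hbase')
  exact hdiv.trans <| le_mul_of_one_le_right (le_trans (by positivity) hdiv)
    (one_le_pairBound_factor (by lia) b)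

theorem four_le_of_ceil_pairBound_le {a b k : ℕ} (ha : 0 < a)
    (hk : (⌈pairBound a b + 1⌉ : ℤ) * 2 ^ (a + 1) ≤ (k : ℝ)) : 4 ≤ k := by
  have hceil : 1 ≤ ⌈pairBound a b + 1⌉ :=
    Int.one_le_ceil_iff.2 (by linarith [pairBound_nonneg ha b])
  have hpow : (2 : ℤ) ^ 2 ≤ 2 ^ (a + 1) := by gcongr <;> lia
  have hk' : ⌈pairBound a b + 1⌉ * 2 ^ (a + 1) ≤ (k : ℤ) := by exact_mod_cast hk
  have hprod := mul_le_mul hceil hpow (by norm_num) (by linarith)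
  lia

end PairSums

theorem stmt_14_general (a b : ℕ) (ha : 0 < a) (k : ℕ) (hk : Even k) (hk1 : a = 1 → 4 ≤ k)
    (hkge : 1 < a → (⌈(1 + 3 / (2 * (a : ℝ))) ^ (a - 1) + 1⌉ : ℤ) * 2 ^ (a + 1) ≤ (k : ℝ)) :
    Set.Icc (0 : ℝ) ((k : ℝ) / 2) = imageOn a b (k / 2) cantorTernary := by
  obtain ⟨m, rfl⟩ := hk
  rw [cantorTernary_eq_cantorSet, ← two_mul, Nat.mul_div_cancel_left m two_pos, Nat.cast_mul,
    Nat.cast_two, mul_div_cancel_left₀ _ two_ne_zero]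
  refine (Set.Subset.trans ?_ (cantorSums_pow_subset_imageOn a b m)).antisymm
    (imageOn_cantorSet_subset_Icc a b m)
  rcases (Nat.succ_le_of_lt ha).eq_or_lt with rfl | ha1
  · simp only [pow_one]
    exact Icc_zero_subset_cantorSums_id (by lia)
  · refine Icc_zero_subset_cantorSums_pow ha (Nat.le_ceil _) ?_
    have hceil := hkge ha1
    rw [← natCast_ceil_eq_intCast_ceil (by positivity)] at hceil
    have hceil' : ⌈(1 + 3 / (2 * (a : ℝ))) ^ (a - 1) + 1⌉₊ * 2 ^ (a + 1) ≤ m + m := by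
      exact_mod_cast hceil
    rw [pow_succ] at hceil'
    lia

/-- The Cantor ternary case: for `k` even with
`k ≥ ⌈(1+3/(2a))^{a-1}/(1-1/a)^{b-1}·(1+(1+b/a)/(2b/3+a-1)) + 1⌉·2^{a+1}`,
`[0, k/2] = {x₁^a x₂^b + ⋯ + x_{k-1}^a x_k^b : x_i ∈ C}`. -/
theorem stmt_14 (a b s : ℕ) (ha : 0 < a) (hb : 0 < b) (hs : s = a + b) (hs2 : 2 ≤ s)
    (k : ℕ) (hk : Even k) (hkpos : 0 < k)
    (hkge : (k : ℝ) ≥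
      (⌈(1 + 3 / (2 * (a : ℝ))) ^ (a - 1) / (1 - 1 / (a : ℝ)) ^ (b - 1) *
          (1 + (1 + (b : ℝ) / a) / ((b : ℝ) * (2 / 3) + (a : ℝ) - 1)) + 1⌉ : ℤ) *
        2 ^ (a + 1)) :
    Set.Icc (0 : ℝ) ((k : ℝ) / 2) = imageOn a b (k / 2) cantorTernary := by
  have hbound : ((⌈pairBound a b + 1⌉ : ℤ) : ℝ) * 2 ^ (a + 1) ≤ k := hkge
  exact stmt_14_general a b ha k hk (fun _ => four_le_of_ceil_pairBound_le ha hbound)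
    fun ha1 => le_trans (by gcongr; exact pow_le_pairBound ha1 b) hbound
end
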